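/- If 𝒻 and 𝒢 are regular families, then ι(𝒻[𝒢]) = ι(𝒢)·ι(𝒻), where 𝒻[𝒢] = {⋃_{i=1}^s E_i : E_1 < ... < E_s, each E_i ∈ 𝒢, and (min E_1,...,min E_s) ∈ 𝒻}. -/

import Mathlib

open Ordinal

/-- A family of finite subsets of `ℕ` is hereditary if it contains all subsets of
its members. -/
def IsHereditary (F : Set (Finset ℕ)) : Prop := ∀ E ∈ F, ∀ G ⊆ E, G ∈ F

/-- A family of finite subsets of `ℕ` is spreading if it is closed under replacing
the elements of a member by larger ones, preserving the order. -/
def IsSpreading (F : Set (Finset ℕ)) : Prop :=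
  ∀ E ∈ F, ∀ f : ℕ → ℕ, StrictMonoOn f (E : Set ℕ) → (∀ n ∈ E, n ≤ f n) →
    E.image f ∈ F

/-- A family of finite subsets of `ℕ` is regular if it is compact (as a subset of
the Cantor set `2^ℕ`, identifying sets with their indicator functions), spreading
and hereditary. -/
def IsRegularFamily (F : Set (Finset ℕ)) : Prop :=
  IsCompact ((fun (E : Finset ℕ) (n : ℕ) => decide (n ∈ E)) '' F) ∧
    IsSpreading F ∧ IsHereditary F

/-- The derivative of a family: remove the maximal elements (those admitting no
extension by a larger element within the family). -/
def famDeriv (F : Set (Finset ℕ)) : Set (Finset ℕ) :=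
  {E ∈ F | ∃ n : ℕ, (∀ m ∈ E, m < n) ∧ insert n E ∈ F}

/-- Transfinite iterates of the family derivative. -/
noncomputable def famIter (F : Set (Finset ℕ)) (ξ : Ordinal) : Set (Finset ℕ) :=
  Ordinal.limitRecOn ξ F (fun _ ih => famDeriv ih)
    (fun o _ ih => ⋂ (ζ : Set.Iio o), ih ζ.1 ζ.2)

/-- The Cantor–Bendixson-type index of a family: the least ordinal `ξ` such that
`d^ξ(F) ⊆ {∅}`. -/
noncomputable def famIota (F : Set (Finset ℕ)) : Ordinal :=
  sInf {ξ : Ordinal | famIter F ξ ⊆ {(∅ : Finset ℕ)}}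

/-- The "sum" `(𝒻,𝒢)` of two families: all unions `E ∪ F` with `E ∈ 𝒻`, `F ∈ 𝒢`
and `max E < min F`, together with `𝒻` and `𝒢`. -/
def famSum (F G : Set (Finset ℕ)) : Set (Finset ℕ) :=
  {H : Finset ℕ | ∃ E ∈ F, ∃ E' ∈ G, (∀ m ∈ E, ∀ n ∈ E', m < n) ∧ H = E ∪ E'} ∪ F ∪ G

/-- The "product" `𝒻[𝒢]` of two families: unions of `𝒻`-admissible sequences of
members of `𝒢`, i.e. `E_1 < … < E_s` with each `E_i ∈ 𝒢` and `(min E_i)_i ∈ 𝒻`. -/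
def famProd (F G : Set (Finset ℕ)) : Set (Finset ℕ) :=
  {H : Finset ℕ | ∃ l : List {E : Finset ℕ // E.Nonempty},
    l ≠ [] ∧ (∀ E ∈ l, (E : Finset ℕ) ∈ G) ∧
    l.Chain' (fun E E' => ∀ m ∈ (E : Finset ℕ), ∀ n ∈ (E' : Finset ℕ), m < n) ∧
    (l.map fun E => E.1.min' E.2).toFinset ∈ F ∧
    H = l.foldr (fun E acc => E.1 ∪ acc) ∅}

/-!
Compactness makes end extension within a family well-founded, so the tree of members of a regular
family `𝒻`, ordered by end extension, has a rank function. Its superlevel sets are the iterated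
derivatives of `𝒻`, and its value at `∅` is `ι(𝒻)`.

A member `H` of `𝒻[𝒢]` has a preferred decomposition, obtained by cutting `H` greedily from left to
right: a new block starts only when the current one would leave `𝒢`. The minima of any other
decomposition contain a sequence lying below the greedy minima `M`, so `M ∈ 𝒻` because `𝒻` is
hereditary and spreading. An end extension of `H` either prolongs its last block `E` or opens a new
block, so the rank of `H ≠ ∅` in `𝒻[𝒢]` is `ι(𝒢) · rank M + rank E`, and that of `∅` is
`ι(𝒢) · ι(𝒻)`.
-/

universe u

theorem mul_add_lt_mul_of_lt {a b c d : Ordinal.{u}} (hca : c < a) (hbd : b < d) :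
    a * b + c < a * d := by
  simpa using Ordinal.opow_mul_add_lt_opow_mul (u := 1) (by simpa using hca) hbd

/-! ### Iterated derivatives -/

section famIter

variable (F : Set (Finset ℕ))

theorem famIter_zero : famIter.{u} F 0 = F := by
  rw [famIter, Ordinal.limitRecOn_zero]

theorem famIter_add_one (ξ : Ordinal.{u}) : famIter F (ξ + 1) = famDeriv (famIter F ξ) := by
  rw [famIter, Ordinal.limitRecOn_add_one, ← famIter]

theorem famIter_of_isSuccLimit {ξ : Ordinal.{u}} (hξ : Order.IsSuccLimit ξ) :
    famIter F ξ = ⋂ ζ : Set.Iio ξ, famIter F ζ := by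
  rw [famIter, Ordinal.limitRecOn_limit _ _ _ _ hξ]
  rfl

theorem mem_famIter_iff {ξ : Ordinal.{u}} {E : Finset ℕ} :
    E ∈ famIter F ξ ↔
      E ∈ F ∧ ∀ ζ < ξ, ∃ n, (∀ m ∈ E, m < n) ∧ insert n E ∈ famIter F ζ := by
  induction ξ using Ordinal.limitRecOn with
  | zero => simp [famIter_zero]
  | add_one ξ ih =>
    simp only [famIter_add_one, famDeriv, Set.mem_sep_iff, ih, Order.lt_add_one_iff,
      le_iff_lt_or_eq, or_imp, forall_and, forall_eq, and_assoc]
  | limit ξ hξ ih =>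
    rw [famIter_of_isSuccLimit F hξ, Set.mem_iInter]
    constructor
    · intro hE
      refine ⟨((ih 0 hξ.bot_lt).1 (hE ⟨0, hξ.bot_lt⟩)).1, fun ζ hζ => ?_⟩
      have hEζ := hE ⟨ζ + 1, hξ.add_one_lt hζ⟩
      rw [famIter_add_one] at hEζ
      exact hEζ.2
    · rintro ⟨hE, hext⟩ ⟨ζ, hζ⟩
      exact (ih ζ hζ).2 ⟨hE, fun η hη => hext η (hη.trans hζ)⟩

end famIter

/-! ### Rank functions -/

/-- `r` is a rank function for the tree of members of `F` ordered by end extension: the immediate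
successors of `E` have smaller rank than `E`, and their ranks are cofinal below `r E`. The root `∅`
belongs to the tree even if it is not in `F`, since `famProd F G` never contains it. -/
structure IsRankFunction (F : Set (Finset ℕ)) (r : Finset ℕ → Ordinal.{u}) : Prop where
  insert_lt : ∀ ⦃E : Finset ℕ⦄ ⦃n : ℕ⦄, (∀ m ∈ E, m < n) → insert n E ∈ F → r (insert n E) < r E
  exists_le_insert : ∀ ⦃E : Finset ℕ⦄ ⦃γ : Ordinal.{u}⦄, E ∈ insert ∅ F → γ < r E →
    ∃ n, (∀ m ∈ E, m < n) ∧ insert n E ∈ F ∧ γ ≤ r (insert n E)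

namespace IsRankFunction

variable {F : Set (Finset ℕ)} {r : Finset ℕ → Ordinal.{u}}

theorem mem_famIter_iff (hr : IsRankFunction F r) {ξ : Ordinal.{u}} {E : Finset ℕ} :
    E ∈ famIter F ξ ↔ E ∈ F ∧ ξ ≤ r E := by
  induction ξ using WellFoundedLT.induction generalizing E with
  | ind ξ ih =>
  rw [_root_.mem_famIter_iff]
  refine and_congr_right fun hE => ⟨fun hext => le_of_forall_lt fun ζ hζ => ?_, fun hξ ζ hζ => ?_⟩
  · obtain ⟨n, hn, hnζ⟩ := hext ζ hζ
    obtain ⟨hnF, hle⟩ := (ih ζ hζ).1 hnζ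
    exact hle.trans_lt (hr.insert_lt hn hnF)
  · obtain ⟨n, hn, hnF, hle⟩ := hr.exists_le_insert (.inr hE) (hζ.trans_le hξ)
    exact ⟨n, hn, (ih ζ hζ).2 ⟨hnF, hle⟩⟩

theorem famIota_eq (hr : IsRankFunction F r) (hlt : ∀ E ∈ F, E.Nonempty → r E < r ∅) :
    famIota.{u} F = r ∅ := by
  suffices {ξ : Ordinal.{u} | famIter F ξ ⊆ {∅}} = Set.Ici (r ∅) by
    rw [famIota, this, csInf_Ici]
  ext ξ
  refine ⟨fun hξ => ?_, fun hξ E hE => ?_⟩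
  · by_contra hξr
    obtain ⟨n, -, hnF, hle⟩ := hr.exists_le_insert (.inl rfl) (not_le.1 hξr)
    exact Finset.insert_ne_empty n ∅ (hξ (hr.mem_famIter_iff.2 ⟨hnF, hle⟩))
  · obtain ⟨hEF, hle⟩ := hr.mem_famIter_iff.1 hE
    by_contra hne
    exact (hξ.trans hle).not_gt (hlt E hEF (Finset.nonempty_iff_ne_empty.2 hne))

theorem lt_empty (hr : IsRankFunction F r) (hF : IsHereditary F) {E : Finset ℕ} (hE : E ∈ F)
    (hne : E.Nonempty) : r E < r ∅ := by
  induction E using Finset.induction_on_max with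
  | empty => simp at hne
  | insert n s hn ih =>
    have hlt := hr.insert_lt hn hE
    rcases s.eq_empty_or_nonempty with rfl | hs
    · exact hlt
    · exact hlt.trans (ih (hF _ hE _ (Finset.subset_insert n s)) hs)

theorem le_image (hr : IsRankFunction F r) (hF : IsSpreading F) {f : ℕ → ℕ} (hf : StrictMono f)
    {E : Finset ℕ} (hE : E ∈ F) : r E ≤ r (E.image f) := by
  induction hξ : r E using WellFoundedLT.induction generalizing E with
  | ind ξ ih =>
  subst hξ
  refine le_of_forall_lt fun γ hγ => ?_
  obtain ⟨n, hn, hnF, hle⟩ := hr.exists_le_insert (.inr hE) hγ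
  have himage := hF _ hnF f (hf.strictMonoOn _) fun _ _ => hf.le_apply
  have hle' := hle.trans (ih _ (hr.insert_lt hn hnF) hnF rfl)
  rw [Finset.image_insert] at himage hle'
  refine hle'.trans_lt (hr.insert_lt ?_ himage)
  simpa only [Finset.forall_mem_image] using fun m hm => hf (hn m hm)

end IsRankFunction

/-! ### Compact families -/

theorem exists_subset_of_monotone {F : Set (Finset ℕ)}
    (hF : IsCompact ((fun (E : Finset ℕ) (n : ℕ) => decide (n ∈ E)) '' F))
    {f : ℕ → Finset ℕ} (hf : Monotone f) (hfF : ∀ k, f k ∈ F) : ∃ E ∈ F, ∀ k, f k ⊆ E := by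
  have hclosed (k : ℕ) : IsClosed {s : ℕ → Bool | ∀ n ∈ f k, s n = true} := by
    simp only [Set.ofPred_forall]
    exact isClosed_biInter fun n _ => isClosed_eq (continuous_apply n) continuous_const
  obtain ⟨_, ⟨E, hE, rfl⟩, hsub⟩ := hF.inter_iInter_nonempty _ hclosed fun u => by
    obtain ⟨k, hk⟩ := u.bddAbove
    refine ⟨_, ⟨f k, hfF k, rfl⟩, ?_⟩
    simpa using fun i hi n (hn : n ∈ f i) => hf (hk hi) hn
  exact ⟨E, hE, fun k n hn => by simpa using Set.mem_iInter.1 hsub k n hn⟩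

theorem wellFounded_ssuperset_of_isCompact {F : Set (Finset ℕ)}
    (hF : IsCompact ((fun (E : Finset ℕ) (n : ℕ) => decide (n ∈ E)) '' F)) :
    WellFounded fun E' E : Finset ℕ => E' ∈ F ∧ E ⊂ E' := by
  refine wellFounded_iff_isEmpty_descending_chain.2 ⟨fun ⟨f, hf⟩ => ?_⟩
  have hmono : StrictMono fun k => f (k + 1) := strictMono_nat_of_lt_succ fun k => (hf (k + 1)).2
  obtain ⟨E, -, hE⟩ := exists_subset_of_monotone hF hmono.monotone fun k => (hf k).1
  exact Set.infinite_range_of_injective hmono.injective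
    (E.powerset.finite_toSet.subset (Set.range_subset_iff.2 fun k => by simpa using hE k))

theorem exists_isRankFunction {F : Set (Finset ℕ)}
    (hF : IsCompact ((fun (E : Finset ℕ) (n : ℕ) => decide (n ∈ E)) '' F)) :
    ∃ r : Finset ℕ → Ordinal.{u}, IsRankFunction F r := by
  let child (E' E : Finset ℕ) : Prop := E' ∈ F ∧ ∃ n, (∀ m ∈ E, m < n) ∧ E' = insert n E
  have hchild : IsWellFounded (Finset ℕ) child := by
    refine ⟨Subrelation.wf (fun {E' E} h => ?_) (wellFounded_ssuperset_of_isCompact hF)⟩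
    obtain ⟨hE', n, hn, rfl⟩ := h
    exact ⟨hE', Finset.ssubset_insert fun hnE => (hn n hnE).false⟩
  -- Ranks of countable trees live in `Ordinal.{0}`, while `famIota` takes values in any universe.
  refine ⟨fun E => Ordinal.lift.{u} (IsWellFounded.rank child E), fun E n hn hnF =>
    Ordinal.lift_lt.2 (IsWellFounded.rank_lt_of_rel ⟨hnF, n, hn, rfl⟩), fun E γ _ hγ => ?_⟩
  obtain ⟨γ, hγ', rfl⟩ := Ordinal.lt_lift_iff.1 hγ
  rw [IsWellFounded.rank_eq, Ordinal.lt_iSup_iff] at hγ'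
  obtain ⟨⟨_, hnF, n, hn, rfl⟩, hle⟩ := hγ'
  exact ⟨n, hn, hnF, Ordinal.lift_le.2 (Order.lt_succ_iff.1 hle)⟩

/-! ### Spreading families -/

theorem exists_strictMono_image_insert {E : Finset ℕ} {n k : ℕ} (hn : ∀ m ∈ E, m < n)
    (hnk : n ≤ k) : ∃ f : ℕ → ℕ, StrictMono f ∧ (insert n E).image f = insert k E := by
  refine ⟨fun x => if x < n then x else x + (k - n), fun a b hab => ?_, ?_⟩
  · dsimp only
    split_ifs <;> lia
  · rw [Finset.image_insert, Finset.image_congr fun x hx => if_pos (hn x hx), Finset.image_id',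
      if_neg n.lt_irrefl, Nat.add_sub_cancel' hnk]

namespace IsSpreading

variable {F : Set (Finset ℕ)}

theorem insert_mem_of_le (hF : IsSpreading F) {E : Finset ℕ} {n k : ℕ} (hn : ∀ m ∈ E, m < n)
    (hnk : n ≤ k) (hnF : insert n E ∈ F) : insert k E ∈ F := by
  obtain ⟨f, hf, himage⟩ := exists_strictMono_image_insert hn hnk
  exact himage ▸ hF _ hnF f (hf.strictMonoOn _) fun _ _ => hf.le_apply

theorem rank_insert_le_of_le (hF : IsSpreading F) {r : Finset ℕ → Ordinal.{u}}
    (hr : IsRankFunction F r) {E : Finset ℕ} {n k : ℕ} (hn : ∀ m ∈ E, m < n) (hnk : n ≤ k)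
    (hnF : insert n E ∈ F) : r (insert n E) ≤ r (insert k E) := by
  obtain ⟨f, hf, himage⟩ := exists_strictMono_image_insert hn hnk
  exact himage ▸ hr.le_image hF hf hnF

theorem mem_of_image_mem (hF : IsSpreading F) {M : Finset ℕ} {g : ℕ → ℕ}
    (hg : StrictMonoOn g (M : Set ℕ)) (hle : ∀ m ∈ M, g m ≤ m) (hM : M.image g ∈ F) : M ∈ F := by
  have hinv : ∀ m ∈ M, Function.invFunOn g (M : Set ℕ) (g m) = m :=
    fun m hm => hg.injOn.leftInvOn_invFunOn hm
  have himage : (M.image g).image (Function.invFunOn g (M : Set ℕ)) = M := by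
    rw [Finset.image_image]
    exact (Finset.image_congr hinv).trans Finset.image_id
  rw [← himage]
  refine hF _ hM _ ?_ ?_
  · rw [Finset.coe_image]
    rintro _ ⟨a, ha, rfl⟩ _ ⟨b, hb, rfl⟩ hab
    rw [hinv a ha, hinv b hb]
    exact (hg.lt_iff_lt ha hb).1 hab
  · simp only [Finset.forall_mem_image]
    intro m hm
    rw [hinv m hm]
    exact hle m hm

end IsSpreading

/-! ### Greedy decompositions -/

/-- `x` starts a block of the greedy decomposition of `H` into members of `G`: a block started at
an earlier `a` cannot reach `x` without leaving `G`. -/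
def IsGreedyMin (G : Set (Finset ℕ)) (H : Finset ℕ) (x : ℕ) : Prop :=
  x ∈ H ∧ ∀ a, a < x → IsGreedyMin G H a → H ∩ Finset.Icc a x ∉ G
termination_by x

open scoped Classical in
/-- The minima of the blocks of the greedy decomposition of `H` into members of `G`. -/
noncomputable def greedyMinima (G : Set (Finset ℕ)) (H : Finset ℕ) : Finset ℕ :=
  {x ∈ H | IsGreedyMin G H x}

/-- The block of the greedy decomposition of `H` into members of `G` whose minimum is `a`. -/
noncomputable def greedyBlock (G : Set (Finset ℕ)) (H : Finset ℕ) (a : ℕ) : Finset ℕ :=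
  {x ∈ H | a ≤ x ∧ ∀ m ∈ greedyMinima G H, m ≤ x → m ≤ a}

/-- The last block of the greedy decomposition of `H` into members of `G`, empty if `H` is. -/
noncomputable def greedyLastBlock (G : Set (Finset ℕ)) (H : Finset ℕ) : Finset ℕ :=
  {x ∈ H | ∀ m ∈ greedyMinima G H, m ≤ x}

/-- The relation `E < E'` of the paper: `max E < min E'`. -/
def Precedes (E E' : Finset ℕ) : Prop := ∀ m ∈ E, ∀ n ∈ E', m < n

section greedy

variable {G : Set (Finset ℕ)} {H : Finset ℕ} {a b n x : ℕ}

theorem greedyMinima_subset : greedyMinima G H ⊆ H := by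
  classical exact Finset.filter_subset _ _

theorem mem_greedyMinima :
    x ∈ greedyMinima G H ↔ x ∈ H ∧ ∀ a ∈ greedyMinima G H, a < x → H ∩ Finset.Icc a x ∉ G := by
  have hmem : ∀ y, y ∈ greedyMinima G H ↔ IsGreedyMin G H y := fun y => by
    classical
    rw [greedyMinima, Finset.mem_filter, and_iff_right_of_imp]
    rw [IsGreedyMin]
    exact And.left
  simp only [hmem]
  rw [IsGreedyMin]
  exact and_congr_right fun _ => forall_congr' fun _ => forall_comm

theorem exists_mem_greedyMinima_le (hx : x ∈ H) : ∃ a ∈ greedyMinima G H, a ≤ x := by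
  by_contra! hlt
  exact (hlt x (mem_greedyMinima.2 ⟨hx, fun a ha hax => absurd hax (hlt a ha).not_gt⟩)).false

theorem greedyMinima_nonempty (hH : H.Nonempty) : (greedyMinima G H).Nonempty :=
  hH.elim fun _ hx => (exists_mem_greedyMinima_le hx).imp fun _ => And.left

theorem exists_mem_greedyBlock (hx : x ∈ H) : ∃ a ∈ greedyMinima G H, x ∈ greedyBlock G H a := by
  obtain ⟨b, hb, hbx⟩ := exists_mem_greedyMinima_le (G := G) hx
  obtain ⟨a, ha, hmax⟩ := Finset.exists_max_image {m ∈ greedyMinima G H | m ≤ x} id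
    ⟨b, Finset.mem_filter.2 ⟨hb, hbx⟩⟩
  obtain ⟨haM, hax⟩ := Finset.mem_filter.1 ha
  exact ⟨a, haM, Finset.mem_filter.2 ⟨hx, hax, fun m hm hmx =>
    hmax m (Finset.mem_filter.2 ⟨hm, hmx⟩)⟩⟩

theorem isLeast_greedyBlock (ha : a ∈ greedyMinima G H) :
    IsLeast (greedyBlock G H a : Set ℕ) a :=
  ⟨Finset.mem_filter.2 ⟨greedyMinima_subset ha, le_rfl, fun _ _ => id⟩,
    fun _ hx => (Finset.mem_filter.1 hx).2.1⟩

theorem greedyBlock_precedes (hb : b ∈ greedyMinima G H) (hab : a < b) :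
    Precedes (greedyBlock G H a) (greedyBlock G H b) := by
  intro x hx y hy
  by_contra! hyx
  have hby : b ≤ y := (Finset.mem_filter.1 hy).2.1
  exact ((Finset.mem_filter.1 hx).2.2 b hb (hby.trans hyx)).not_gt hab

theorem greedyBlock_mem (hG : IsHereditary G) (hHG : ∀ x ∈ H, {x} ∈ G)
    (ha : a ∈ greedyMinima G H) : greedyBlock G H a ∈ G := by
  obtain ⟨z, hz, hmax⟩ :=
    Finset.exists_max_image (greedyBlock G H a) id ⟨a, (isLeast_greedyBlock ha).1⟩
  obtain ⟨hzH, haz, hza⟩ := Finset.mem_filter.1 hz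
  by_cases hzM : z ∈ greedyMinima G H
  · obtain rfl : z = a := (hza z hzM le_rfl).antisymm haz
    refine hG _ (hHG z hzH) _ fun y hy => Finset.mem_singleton.2 ((hmax y hy).antisymm ?_)
    exact (isLeast_greedyBlock ha).2 hy
  · rw [mem_greedyMinima] at hzM
    push Not at hzM
    obtain ⟨b, hb, hbz, hbG⟩ := hzM hzH
    refine hG _ hbG _ fun y hy => ?_
    obtain ⟨hyH, hay, -⟩ := Finset.mem_filter.1 hy
    exact Finset.mem_inter.2 ⟨hyH, Finset.mem_Icc.2 ⟨(hza b hb hbz.le).trans hay, hmax y hy⟩⟩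

theorem greedyLastBlock_mem (hG : IsHereditary G) (hHG : ∀ x ∈ H, {x} ∈ G) (hH : H.Nonempty) :
    greedyLastBlock G H ∈ G := by
  obtain ⟨e, he, hmax⟩ := Finset.exists_max_image _ id (greedyMinima_nonempty (G := G) hH)
  refine hG _ (greedyBlock_mem hG hHG he) _ fun x hx => ?_
  obtain ⟨hxH, hMx⟩ := Finset.mem_filter.1 hx
  exact Finset.mem_filter.2 ⟨hxH, hMx e he, fun m hm _ => hmax m hm⟩

theorem greedyLastBlock_nonempty (hH : H.Nonempty) : (greedyLastBlock G H).Nonempty := by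
  obtain ⟨x, hx, hmax⟩ := Finset.exists_max_image H id hH
  exact ⟨x, Finset.mem_filter.2 ⟨hx, fun m hm => hmax m (greedyMinima_subset hm)⟩⟩

theorem greedyMinima_empty : greedyMinima G ∅ = ∅ := rfl

end greedy

/-! ### End extensions and greedy decompositions -/

section insert

variable {G : Set (Finset ℕ)} {H : Finset ℕ} {n : ℕ}

theorem mem_greedyMinima_insert_of_mem (hn : ∀ m ∈ H, m < n) {x : ℕ} (hx : x ∈ H) :
    x ∈ greedyMinima G (insert n H) ↔ x ∈ greedyMinima G H := by
  induction x using Nat.strong_induction_on with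
  | h x ih =>
  have hninter (a : ℕ) : insert n H ∩ Finset.Icc a x = H ∩ Finset.Icc a x :=
    Finset.insert_inter_of_notMem fun h => (hn x hx).not_ge (Finset.mem_Icc.1 h).2
  have hlow : ∀ a < x, a ∈ greedyMinima G (insert n H) ↔ a ∈ greedyMinima G H := by
    intro a hax
    by_cases ha : a ∈ H
    · exact ih a hax ha
    · refine iff_of_false (fun h => ?_) fun h => ha (greedyMinima_subset h)
      obtain rfl := (Finset.mem_insert.1 (greedyMinima_subset h)).resolve_right ha
      exact (hn x hx).not_gt hax
  rw [mem_greedyMinima, mem_greedyMinima]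
  simp only [Finset.mem_insert, hx, or_true, true_and, hninter]
  exact forall_congr' fun a => ⟨fun h ha hax => h ((hlow a hax).2 ha) hax,
    fun h ha hax => h ((hlow a hax).1 ha) hax⟩

theorem greedyMinima_subset_greedyMinima_insert (hn : ∀ m ∈ H, m < n) :
    greedyMinima G H ⊆ greedyMinima G (insert n H) :=
  fun _ hx => (mem_greedyMinima_insert_of_mem hn (greedyMinima_subset hx)).2 hx

theorem greedyMinima_insert_of_mem (hn : ∀ m ∈ H, m < n)
    (hnM : n ∈ greedyMinima G (insert n H)) :
    greedyMinima G (insert n H) = insert n (greedyMinima G H) := by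
  refine Finset.Subset.antisymm (fun x hx => ?_)
    (Finset.insert_subset hnM (greedyMinima_subset_greedyMinima_insert hn))
  rcases Finset.mem_insert.1 (greedyMinima_subset hx) with rfl | hxH
  · exact Finset.mem_insert_self _ _
  · exact Finset.mem_insert_of_mem ((mem_greedyMinima_insert_of_mem hn hxH).1 hx)

theorem greedyMinima_insert_of_notMem (hn : ∀ m ∈ H, m < n)
    (hnM : n ∉ greedyMinima G (insert n H)) :
    greedyMinima G (insert n H) = greedyMinima G H := by
  refine Finset.Subset.antisymm (fun x hx => ?_) (greedyMinima_subset_greedyMinima_insert hn)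
  have hxH := (Finset.mem_insert.1 (greedyMinima_subset hx)).resolve_left fun h => hnM (h ▸ hx)
  exact (mem_greedyMinima_insert_of_mem hn hxH).1 hx

theorem greedyLastBlock_insert_of_mem (hn : ∀ m ∈ H, m < n)
    (hnM : n ∈ greedyMinima G (insert n H)) : greedyLastBlock G (insert n H) = {n} := by
  ext x
  simp only [greedyLastBlock, greedyMinima_insert_of_mem hn hnM, Finset.mem_filter,
    Finset.mem_insert, Finset.mem_singleton, forall_eq_or_imp]
  constructor
  · rintro ⟨rfl | hx, hnx, -⟩
    · rfl
    · exact absurd hnx (hn x hx).not_ge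
  · rintro rfl
    exact ⟨.inl rfl, le_rfl, fun m hm => (hn m (greedyMinima_subset hm)).le⟩

theorem greedyLastBlock_insert_of_notMem (hn : ∀ m ∈ H, m < n)
    (hnM : n ∉ greedyMinima G (insert n H)) :
    greedyLastBlock G (insert n H) = insert n (greedyLastBlock G H) := by
  rw [greedyLastBlock, greedyMinima_insert_of_notMem hn hnM, Finset.filter_insert,
    if_pos fun m hm => (hn m (greedyMinima_subset hm)).le, greedyLastBlock]

theorem notMem_greedyMinima_insert_iff (hG : IsHereditary G) (hn : ∀ m ∈ H, m < n) :
    n ∉ greedyMinima G (insert n H) ↔ H.Nonempty ∧ insert n (greedyLastBlock G H) ∈ G := by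
  rw [mem_greedyMinima]
  push Not
  simp only [Finset.mem_insert_self, true_imp_iff]
  constructor
  · rintro ⟨a, ha, han, haG⟩
    have haH := (Finset.mem_insert.1 (greedyMinima_subset ha)).resolve_left han.ne
    have haM := (mem_greedyMinima_insert_of_mem hn haH).1 ha
    refine ⟨⟨a, haH⟩, hG _ haG _ (Finset.insert_subset ?_ fun x hx => ?_)⟩
    · simp [han.le]
    · obtain ⟨hxH, hMx⟩ := Finset.mem_filter.1 hx
      simp [hxH, hMx a haM, (hn x hxH).le]
  · rintro ⟨hH, hmem⟩
    obtain ⟨e, he, hmax⟩ := Finset.exists_max_image _ id (greedyMinima_nonempty (G := G) hH)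
    refine ⟨e, greedyMinima_subset_greedyMinima_insert hn he, hn e (greedyMinima_subset he),
      hG _ hmem _ fun x hx => ?_⟩
    obtain ⟨hx, hxI⟩ := Finset.mem_inter.1 hx
    refine Finset.mem_insert.2 ((Finset.mem_insert.1 hx).imp_right fun hxH => ?_)
    exact Finset.mem_filter.2 ⟨hxH, fun m hm => (hmax m hm).trans (Finset.mem_Icc.1 hxI).1⟩

end insert

/-! ### Members of the product family -/

section famProd

variable {F G : Set (Finset ℕ)} {H : Finset ℕ} {l : List {E : Finset ℕ // E.Nonempty}}
  {E E' : {E : Finset ℕ // E.Nonempty}}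

theorem mem_foldr_union {x : ℕ} :
    x ∈ l.foldr (fun E acc => E.1 ∪ acc) ∅ ↔ ∃ E ∈ l, x ∈ E.1 := by
  induction l with
  | nil => simp
  | cons E l ih => rw [List.foldr_cons, Finset.mem_union, ih, List.exists_mem_cons_iff]

theorem isChain_iff_pairwise_precedes :
    l.IsChain (fun E E' => Precedes E.1 E'.1) ↔ l.Pairwise fun E E' => Precedes E.1 E'.1 := by
  have : Trans (fun E E' : {E : Finset ℕ // E.Nonempty} => Precedes E.1 E'.1)
      (fun E E' : {E : Finset ℕ // E.Nonempty} => Precedes E.1 E'.1)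
      (fun E E' : {E : Finset ℕ // E.Nonempty} => Precedes E.1 E'.1) :=
    ⟨fun {_ E _} h h' m hm n hn =>
      E.2.elim fun k hk => (h m hm k hk).trans (h' k hk n hn)⟩
  exact List.isChain_iff_pairwise

theorem mem_famProd_iff_exists_pairwise :
    H ∈ famProd F G ↔ ∃ l : List {E : Finset ℕ // E.Nonempty}, l ≠ [] ∧ (∀ E ∈ l, E.1 ∈ G) ∧
      (l.Pairwise fun E E' => Precedes E.1 E'.1) ∧
      (l.map fun E => E.1.min' E.2).toFinset ∈ F ∧ ∀ x, x ∈ H ↔ ∃ E ∈ l, x ∈ E.1 := by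
  -- The relation in `famProd` compares finsets, so its list is coerced through the list monad.
  have hcoe (l : List {E : Finset ℕ // E.Nonempty}) :
      (do let E ← l; pure E.1) = l.map Subtype.val := by
    simp [List.map_eq_flatMap]
  refine exists_congr fun l => ?_
  rw [List.Chain', hcoe, List.isChain_map, Finset.ext_iff]
  simp only [mem_foldr_union]
  rw [← isChain_iff_pairwise_precedes]
  rfl

theorem precedes_trichotomy (hl : l.Pairwise fun E E' => Precedes E.1 E'.1)
    (hE : E ∈ l) (hE' : E' ∈ l) : Precedes E.1 E'.1 ∨ E = E' ∨ Precedes E'.1 E.1 := by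
  have hsymm : Std.Symm fun E E' : {E : Finset ℕ // E.Nonempty} =>
      Precedes E.1 E'.1 ∨ Precedes E'.1 E.1 := ⟨fun _ _ => Or.symm⟩
  have hcomp : l.Pairwise fun E E' => Precedes E.1 E'.1 ∨ Precedes E'.1 E.1 := hl.imp .inl
  by_cases heq : E = E'
  · exact .inr (.inl heq)
  · exact (hcomp.forall hE hE' heq).imp_right .inr

theorem precedes_of_mem_greedyMinima (hG : IsHereditary G) (hlG : ∀ E ∈ l, E.1 ∈ G)
    (hl : l.Pairwise fun E E' => Precedes E.1 E'.1) (hlH : ∀ x ∈ H, ∃ E ∈ l, x ∈ E.1)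
    {a b : ℕ} (hb : b ∈ greedyMinima G H) (ha : a ∈ greedyMinima G H) (hab : a < b)
    (hE : E ∈ l) (haE : a ∈ E.1) (hE' : E' ∈ l) (hbE' : b ∈ E'.1) : Precedes E.1 E'.1 := by
  rcases precedes_trichotomy hl hE hE' with hlt | rfl | hgt
  · exact hlt
  · refine absurd (hG _ (hlG E hE) _ fun y hy => ?_) ((mem_greedyMinima.1 hb).2 a ha hab)
    obtain ⟨hyH, hyI⟩ := Finset.mem_inter.1 hy
    obtain ⟨hay, hyb⟩ := Finset.mem_Icc.1 hyI
    obtain ⟨E', hE', hyE'⟩ := hlH y hyH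
    rcases precedes_trichotomy hl hE' hE with hlt | rfl | hgt
    · exact absurd (hlt y hyE' a haE) hay.not_gt
    · exact hyE'
    · exact absurd (hgt b hbE' y hyE') hyb.not_gt
  · exact absurd (hgt b hbE' a haE) hab.not_gt

theorem greedyMinima_mem_of_mem_famProd (hFs : IsSpreading F) (hFh : IsHereditary F)
    (hG : IsHereditary G) (hH : H ∈ famProd F G) : greedyMinima G H ∈ F := by
  obtain ⟨l, -, hlG, hl, hlF, hlH⟩ := mem_famProd_iff_exists_pairwise.1 hH
  have hmin : ∀ x ∈ greedyMinima G H, ∃ y, ∃ E ∈ l, x ∈ E.1 ∧ E.1.min' E.2 = y := fun x hx => by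
    obtain ⟨E, hE, hxE⟩ := (hlH x).1 (greedyMinima_subset hx)
    exact ⟨_, E, hE, hxE, rfl⟩
  choose! g hg using hmin
  refine hFs.mem_of_image_mem (g := g) (fun a ha b hb hab => ?_) (fun x hx => ?_)
    (hFh _ hlF _ (Finset.image_subset_iff.2 fun x hx => ?_))
  · obtain ⟨E, hE, haE, hEa⟩ := hg a ha
    obtain ⟨E', hE', hbE', hEb⟩ := hg b hb
    rw [← hEa, ← hEb]
    exact precedes_of_mem_greedyMinima hG hlG hl (fun x => (hlH x).1) hb ha hab hE haE hE' hbE' _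
      (Finset.min'_mem _ _) _ (Finset.min'_mem _ _)
  · obtain ⟨E, -, hxE, hEx⟩ := hg x hx
    exact hEx ▸ Finset.min'_le _ _ hxE
  · obtain ⟨E, hE, -, hEx⟩ := hg x hx
    exact List.mem_toFinset.2 (List.mem_map.2 ⟨E, hE, hEx⟩)

theorem mem_famProd_of_blocks {N : Finset ℕ} (hN : N.Nonempty) (hNF : N ∈ F) {B : ℕ → Finset ℕ}
    (hBG : ∀ a ∈ N, B a ∈ G) (hmin : ∀ a ∈ N, IsLeast (B a : Set ℕ) a)
    (hlt : ∀ a ∈ N, ∀ b ∈ N, a < b → Precedes (B a) (B b)) : N.biUnion B ∈ famProd F G := by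
  let block (a : N) : {E : Finset ℕ // E.Nonempty} := ⟨B a, a, (hmin a a.2).1⟩
  have hmin' (a : N) : (block a).1.min' (block a).2 = a :=
    ((block a).1.isLeast_min' (block a).2).unique (hmin a a.2)
  refine mem_famProd_iff_exists_pairwise.2
    ⟨((Finset.univ : Finset N).sort).map block, ?_, ?_, ?_, ?_, ?_⟩
  · obtain ⟨a, ha⟩ := hN
    exact List.ne_nil_of_mem (List.mem_map.2 ⟨⟨a, ha⟩, by simp, rfl⟩)
  · exact List.forall_mem_map.2 fun a _ => hBG a a.2
  · exact List.pairwise_map.2 ((Finset.sortedLT_sort _).pairwise.imp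
      fun {a b : N} hab => hlt a a.2 b b.2 hab)
  · convert hNF
    ext x
    simp [hmin']
  · intro x
    simp only [Finset.mem_biUnion, List.mem_map, Finset.mem_sort, Finset.mem_univ, true_and,
      exists_exists_eq_and]
    simp only [Subtype.exists, exists_prop, block]

theorem mem_famProd_iff (hFs : IsSpreading F) (hFh : IsHereditary F) (hG : IsHereditary G) :
    H ∈ famProd F G ↔ H.Nonempty ∧ (∀ x ∈ H, {x} ∈ G) ∧ greedyMinima G H ∈ F := by
  constructor
  · intro hH
    obtain ⟨l, hne, hlG, -, -, hlH⟩ := mem_famProd_iff_exists_pairwise.1 hH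
    refine ⟨?_, fun x hx => ?_, greedyMinima_mem_of_mem_famProd hFs hFh hG hH⟩
    · obtain ⟨E, hE⟩ := List.exists_mem_of_ne_nil l hne
      exact E.2.imp fun x hx => (hlH x).2 ⟨E, hE, hx⟩
    · obtain ⟨E, hE, hxE⟩ := (hlH x).1 hx
      exact hG _ (hlG E hE) _ (Finset.singleton_subset_iff.2 hxE)
  · rintro ⟨hH, hHG, hMF⟩
    convert mem_famProd_of_blocks (greedyMinima_nonempty hH) hMF
      (fun a ha => greedyBlock_mem hG hHG ha) (fun a ha => isLeast_greedyBlock ha)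
      fun a _ b hb => greedyBlock_precedes hb
    refine Finset.Subset.antisymm (fun x hx => ?_) (Finset.biUnion_subset.2 fun a _ =>
      Finset.filter_subset _ _)
    exact Finset.mem_biUnion.2 (exists_mem_greedyBlock hx)

end famProd

/-! ### The rank function of the product family -/

section prodRank

variable {F G : Set (Finset ℕ)} {H M : Finset ℕ} {n : ℕ} {rF rG : Finset ℕ → Ordinal.{u}}

/-- The rank function of `famProd F G` obtained from rank functions of `F` and `G`. If `H = ∅`,
there is no last block to prolong, and the second summand is `0` rather than `rG ∅`. -/
noncomputable def prodRank (G : Set (Finset ℕ)) (rF rG : Finset ℕ → Ordinal.{u})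
    (H : Finset ℕ) : Ordinal.{u} :=
  rG ∅ * rF (greedyMinima G H) + if H = ∅ then 0 else rG (greedyLastBlock G H)

theorem prodRank_empty : prodRank G rF rG ∅ = rG ∅ * rF ∅ := by
  rw [prodRank, if_pos rfl, add_zero, greedyMinima_empty]

theorem prodRank_of_nonempty (hH : H.Nonempty) :
    prodRank G rF rG H = rG ∅ * rF (greedyMinima G H) + rG (greedyLastBlock G H) := by
  rw [prodRank, if_neg hH.ne_empty]

theorem prodRank_insert_of_mem (hn : ∀ m ∈ H, m < n) (hnM : n ∈ greedyMinima G (insert n H)) :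
    prodRank G rF rG (insert n H) = rG ∅ * rF (insert n (greedyMinima G H)) + rG {n} := by
  rw [prodRank_of_nonempty (Finset.insert_nonempty n H), greedyMinima_insert_of_mem hn hnM,
    greedyLastBlock_insert_of_mem hn hnM]

theorem prodRank_insert_of_notMem (hn : ∀ m ∈ H, m < n)
    (hnM : n ∉ greedyMinima G (insert n H)) :
    prodRank G rF rG (insert n H) =
      rG ∅ * rF (greedyMinima G H) + rG (insert n (greedyLastBlock G H)) := by
  rw [prodRank_of_nonempty (Finset.insert_nonempty n H), greedyMinima_insert_of_notMem hn hnM,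
    greedyLastBlock_insert_of_notMem hn hnM]

theorem prodRank_lt_mul (hGh : IsHereditary G) (hrG : IsRankFunction G rG)
    (hHG : ∀ x ∈ H, {x} ∈ G) (hH : H.Nonempty) {α : Ordinal.{u}}
    (hα : rF (greedyMinima G H) < α) : prodRank G rF rG H < rG ∅ * α := by
  rw [prodRank_of_nonempty hH]
  exact mul_add_lt_mul_of_lt (hrG.lt_empty hGh (greedyLastBlock_mem hGh hHG hH)
    (greedyLastBlock_nonempty hH)) hα

theorem prodRank_insert_lt (hFs : IsSpreading F) (hFh : IsHereditary F) (hGh : IsHereditary G)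
    (hrF : IsRankFunction F rF) (hrG : IsRankFunction G rG) (hn : ∀ m ∈ H, m < n)
    (hnH : insert n H ∈ famProd F G) : prodRank G rF rG (insert n H) < prodRank G rF rG H := by
  obtain ⟨hne, hHG, hMF⟩ := (mem_famProd_iff hFs hFh hGh).1 hnH
  by_cases hnM : n ∈ greedyMinima G (insert n H)
  · rw [greedyMinima_insert_of_mem hn hnM] at hMF
    have hlt := hrF.insert_lt (fun m hm => hn m (greedyMinima_subset hm)) hMF
    rw [← greedyMinima_insert_of_mem hn hnM] at hlt
    exact (prodRank_lt_mul hGh hrG hHG hne hlt).trans_le le_self_add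
  · obtain ⟨hH, hnG⟩ := (notMem_greedyMinima_insert_iff hGh hn).1 hnM
    rw [prodRank_insert_of_notMem hn hnM, prodRank_of_nonempty hH, add_lt_add_iff_left]
    exact hrG.insert_lt (fun m hm => hn m (Finset.filter_subset _ _ hm)) hnG

theorem exists_le_mul_rank_insert_add (hFs : IsSpreading F) (hGs : IsSpreading G)
    (hrF : IsRankFunction F rF) (hrG : IsRankFunction G rG) (hM : M ∈ insert ∅ F) (k : ℕ)
    {ξ : Ordinal.{u}} (hξ : ξ < rG ∅ * rF M) :
    ∃ n, k ≤ n ∧ insert n M ∈ F ∧ {n} ∈ G ∧ ξ ≤ rG ∅ * rF (insert n M) + rG {n} := by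
  -- Write `ξ = rG ∅ * α + β` with `α < rF M` and `β < rG ∅`. Both families are spreading, so a
  -- single `n` serves for `α` and for `β`.
  have hG0 : rG ∅ ≠ 0 := by
    intro h
    rw [h, zero_mul] at hξ
    exact not_lt_zero hξ
  obtain ⟨a, haM, haF, hdiv⟩ := hrF.exists_le_insert hM ((Ordinal.lt_mul_iff_div_lt hG0).1 hξ)
  obtain ⟨b, hb, hbG, hmod⟩ := hrG.exists_le_insert (.inl rfl) (Ordinal.mod_lt ξ hG0)
  have han : a ≤ max a (max b k) := le_max_left _ _
  have hbn : b ≤ max a (max b k) := (le_max_left _ _).trans (le_max_right _ _)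
  refine ⟨max a (max b k), (le_max_right _ _).trans (le_max_right _ _),
    hFs.insert_mem_of_le haM han haF, hGs.insert_mem_of_le hb hbn hbG, ?_⟩
  calc
    ξ = rG ∅ * (ξ / rG ∅) + ξ % rG ∅ := (Ordinal.div_add_mod ξ (rG ∅)).symm
    _ ≤ _ := add_le_add
      (mul_le_mul_right (hdiv.trans (hFs.rank_insert_le_of_le hrF haM han haF)) _)
      (hmod.trans (hGs.rank_insert_le_of_le hrG hb hbn hbG))

theorem exists_le_prodRank_insert_of_lt (hFs : IsSpreading F) (hFh : IsHereditary F)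
    (hGs : IsSpreading G) (hGh : IsHereditary G) (hrF : IsRankFunction F rF)
    (hrG : IsRankFunction G rG) (hH : H ∈ insert ∅ (famProd F G)) {γ : Ordinal.{u}}
    (hγ : γ < rG ∅ * rF (greedyMinima G H)) :
    ∃ n, (∀ m ∈ H, m < n) ∧ insert n H ∈ famProd F G ∧ γ ≤ prodRank G rF rG (insert n H) := by
  obtain ⟨hHG, hM⟩ : (∀ x ∈ H, {x} ∈ G) ∧ greedyMinima G H ∈ insert ∅ F := by
    rcases hH with rfl | hH
    · exact ⟨by simp, .inl greedyMinima_empty⟩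
    · exact ((mem_famProd_iff hFs hFh hGh).1 hH).2.imp_right .inr
  obtain ⟨n, hkn, hnF, hnG, hle⟩ :=
    exists_le_mul_rank_insert_add hFs hGs hrF hrG hM (H.sup id + 1) hγ
  have hn : ∀ m ∈ H, m < n := fun m hm =>
    (Nat.lt_succ_of_le (Finset.le_sup (f := id) hm)).trans_le hkn
  have hmem (hMF : greedyMinima G (insert n H) ∈ F) : insert n H ∈ famProd F G :=
    (mem_famProd_iff hFs hFh hGh).2
      ⟨Finset.insert_nonempty n H, (Finset.forall_mem_insert ..).2 ⟨hnG, hHG⟩, hMF⟩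
  refine ⟨n, hn, ?_⟩
  by_cases hnM : n ∈ greedyMinima G (insert n H)
  · rw [prodRank_insert_of_mem hn hnM]
    exact ⟨hmem (greedyMinima_insert_of_mem hn hnM ▸ hnF), hle⟩
  · rw [prodRank_insert_of_notMem hn hnM]
    refine ⟨hmem ?_, hγ.le.trans le_self_add⟩
    rw [greedyMinima_insert_of_notMem hn hnM]
    exact hFh _ hnF _ (Finset.subset_insert _ _)

theorem exists_le_prodRank_insert_of_le (hFs : IsSpreading F) (hFh : IsHereditary F)
    (hGh : IsHereditary G) (hrG : IsRankFunction G rG) (hH : H ∈ famProd F G) {γ : Ordinal.{u}}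
    (hle : rG ∅ * rF (greedyMinima G H) ≤ γ) (hγ : γ < prodRank G rF rG H) :
    ∃ n, (∀ m ∈ H, m < n) ∧ insert n H ∈ famProd F G ∧ γ ≤ prodRank G rF rG (insert n H) := by
  obtain ⟨hne, hHG, hMF⟩ := (mem_famProd_iff hFs hFh hGh).1 hH
  rw [← Ordinal.add_sub_cancel_of_le hle, prodRank_of_nonempty hne, add_lt_add_iff_left] at hγ
  obtain ⟨n, hnE, hnG, hδ⟩ := hrG.exists_le_insert (.inr (greedyLastBlock_mem hGh hHG hne)) hγ
  have hn : ∀ m ∈ H, m < n := by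
    obtain ⟨x, hx, hmax⟩ := Finset.exists_max_image H id hne
    exact fun m hm => (hmax m hm).trans_lt
      (hnE x (Finset.mem_filter.2 ⟨hx, fun a ha => hmax a (greedyMinima_subset ha)⟩))
  have hnM := (notMem_greedyMinima_insert_iff hGh hn).2 ⟨hne, hnG⟩
  refine ⟨n, hn, (mem_famProd_iff hFs hFh hGh).2 ⟨Finset.insert_nonempty n H, ?_, ?_⟩, ?_⟩
  · exact (Finset.forall_mem_insert ..).2 ⟨hGh _ hnG _ (by simp), hHG⟩
  · rwa [greedyMinima_insert_of_notMem hn hnM]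
  · rw [prodRank_insert_of_notMem hn hnM, ← Ordinal.add_sub_cancel_of_le hle]
    exact add_le_add_right hδ _

theorem isRankFunction_prodRank (hFs : IsSpreading F) (hFh : IsHereditary F)
    (hGs : IsSpreading G) (hGh : IsHereditary G) (hrF : IsRankFunction F rF)
    (hrG : IsRankFunction G rG) : IsRankFunction (famProd F G) (prodRank G rF rG) where
  insert_lt _ _ hn hnH := prodRank_insert_lt hFs hFh hGh hrF hrG hn hnH
  exists_le_insert H γ hH hγ := by
    rcases lt_or_ge γ (rG ∅ * rF (greedyMinima G H)) with hlt | hge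
    · exact exists_le_prodRank_insert_of_lt hFs hFh hGs hGh hrF hrG hH hlt
    · rcases hH with rfl | hH
      · rw [prodRank_empty] at hγ
        exact absurd hγ hge.not_gt
      · exact exists_le_prodRank_insert_of_le hFs hFh hGh hrG hH hge hγ

theorem prodRank_lt_empty (hFs : IsSpreading F) (hFh : IsHereditary F) (hGh : IsHereditary G)
    (hrF : IsRankFunction F rF) (hrG : IsRankFunction G rG) (hH : H ∈ famProd F G) :
    prodRank G rF rG H < prodRank G rF rG ∅ := by
  obtain ⟨hne, hHG, hMF⟩ := (mem_famProd_iff hFs hFh hGh).1 hH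
  rw [prodRank_empty]
  exact prodRank_lt_mul hGh hrG hHG hne (hrF.lt_empty hFh hMF (greedyMinima_nonempty hne))

end prodRank

/-- For regular families `𝒻, 𝒢`: `ι(𝒻[𝒢]) = ι(𝒢) · ι(𝒻)`. -/
theorem famIota_famProd (F G : Set (Finset ℕ)) (hF : IsRegularFamily F)
    (hG : IsRegularFamily G) :
    famIota (famProd F G) = famIota G * famIota F := by
  obtain ⟨hFc, hFs, hFh⟩ := hF
  obtain ⟨hGc, hGs, hGh⟩ := hG
  obtain ⟨rF, hrF⟩ := exists_isRankFunction hFc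
  obtain ⟨rG, hrG⟩ := exists_isRankFunction hGc
  have hr := isRankFunction_prodRank hFs hFh hGs hGh hrF hrG
  calc
    famIota (famProd F G) = prodRank G rF rG ∅ :=
      hr.famIota_eq fun H hH _ => prodRank_lt_empty hFs hFh hGh hrF hrG hH
    _ = rG ∅ * rF ∅ := prodRank_empty
    _ = famIota G * famIota F := by
      rw [hrF.famIota_eq fun E => hrF.lt_empty hFh, hrG.famIota_eq fun E => hrG.lt_empty hGh]
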